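/- Let R be a d-dimensional commutative Noetherian local ring and let M be a nonzero finitely generated R-module with finite injective dimension. If M has finite reducing Gorenstein dimension and depth_R(M) ≥ d − 1, then R is Gorenstein. -/

import Mathlib

open CategoryTheory Pointwise

universe u

variable (R : Type u) [CommRing R]

/-- `Ext^n_R(X, Y) = 0`. -/
def ExtVanish (X Y : Type u) [AddCommGroup X] [Module R X]
    [AddCommGroup Y] [Module R Y] (n : ℕ) : Prop :=
  Subsingleton (((Ext R (ModuleCat.{u} R) n).obj
    (Opposite.op (ModuleCat.of R X))).obj (ModuleCat.of R Y))

/-- A finitely generated module `X` is totally reflexive if the evaluation map to the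
double dual is bijective and `Ext^i(X, R) = 0 = Ext^i(X^*, R)` for all `i ≥ 1`. -/
def IsTotallyReflexive (X : Type u) [AddCommGroup X] [Module R X] : Prop :=
  Module.Finite R X ∧
  Function.Bijective (Module.Dual.eval R X) ∧
  (∀ i : ℕ, 1 ≤ i → ExtVanish R X R i) ∧
  (∀ i : ℕ, 1 ≤ i → ExtVanish R (Module.Dual R X) R i)

/-- `0 → A → B → C → 0` is a short exact sequence. -/
def IsShortExact {A B C : Type u} [AddCommGroup A] [Module R A] [AddCommGroup B] [Module R B]
    [AddCommGroup C] [Module R C] (f : A →ₗ[R] B) (g : B →ₗ[R] C) : Prop :=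
  Function.Injective f ∧ Function.Surjective g ∧ Function.Exact f g

/-- Gorenstein dimension at most `n`: there is a resolution of length `≤ n`
by totally reflexive modules. -/
def GdimLE : ℕ → ModuleCat.{u} R → Prop
  | 0, M => IsTotallyReflexive R M
  | n + 1, M => ∃ (X K : ModuleCat.{u} R) (f : K →ₗ[R] X) (g : X →ₗ[R] M),
      IsTotallyReflexive R X ∧ IsShortExact R f g ∧ GdimLE n K

/-- Projective dimension at most `n`. -/
def PdimLE : ℕ → ModuleCat.{u} R → Prop
  | 0, M => Module.Finite R M ∧ Module.Projective R M
  | n + 1, M => ∃ (X K : ModuleCat.{u} R) (f : K →ₗ[R] X) (g : X →ₗ[R] M),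
      Module.Finite R X ∧ Module.Projective R X ∧ IsShortExact R f g ∧ PdimLE n K

/-- Injective dimension at most `n`. -/
def InjdimLE : ℕ → ModuleCat.{u} R → Prop
  | 0, M => Module.Injective R M
  | n + 1, M => ∃ (I C : ModuleCat.{u} R) (f : M →ₗ[R] I) (g : I →ₗ[R] C),
      Module.Injective R I ∧ IsShortExact R f g ∧ InjdimLE n C

/-- The Gorenstein dimension, as an element of `ℕ∞`. -/
noncomputable def Gdim (M : ModuleCat.{u} R) : ℕ∞ :=
  sInf {n : ℕ∞ | ∃ m : ℕ, n = (m : ℕ∞) ∧ GdimLE R m M}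

/-- The projective dimension, as an element of `ℕ∞`. -/
noncomputable def Pdim (M : ModuleCat.{u} R) : ℕ∞ :=
  sInf {n : ℕ∞ | ∃ m : ℕ, n = (m : ℕ∞) ∧ PdimLE R m M}

/-- A local ring is Gorenstein if it has finite injective dimension over itself. -/
def IsGorensteinRing : Prop :=
  ∃ n : ℕ, InjdimLE R n (ModuleCat.of R R)

/-- `IsSyzygy R n S K` : `S` is an `n`-th syzygy of `K`, i.e. there is an exact sequence
`0 → S → F_{n-1} → ⋯ → F_0 → K → 0` with each `F_j` finitely generated free. -/
def IsSyzygy : ℕ → ModuleCat.{u} R → ModuleCat.{u} R → Prop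
  | 0, S, K => Nonempty (S ≃ₗ[R] K)
  | n + 1, S, K => ∃ (W F : ModuleCat.{u} R) (f : W →ₗ[R] F) (g : F →ₗ[R] K),
      Module.Free R F ∧ Module.Finite R F ∧ IsShortExact R f g ∧ IsSyzygy n S W

/-- One step in a reducing sequence: a short exact sequence
`0 → K^{⊕a} → L → (Ω^n K)^{⊕b} → 0`. -/
def ReducingStep (K L : ModuleCat.{u} R) (a b n : ℕ) : Prop :=
  ∃ (W : ModuleCat.{u} R) (f : (Fin a → K) →ₗ[R] L) (g : L →ₗ[R] (Fin b → W)),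
    IsSyzygy R n W K ∧ IsShortExact R f g

/-- `M` admits a reducing sequence `K_0 = M, K_1, …, K_r` relative to the property `P`,
that is, short exact sequences `0 → K_{i-1}^{⊕a_i} → K_i → (Ω^{n_i}K_{i-1})^{⊕b_i} → 0`
with `a_i, b_i, n_i ≥ 1` and `P (K_r)`. -/
def HasReducingSeq (P : ModuleCat.{u} R → Prop) (M : ModuleCat.{u} R) (r : ℕ) : Prop :=
  ∃ (K : Fin (r + 1) → ModuleCat.{u} R) (a b n : Fin r → ℕ),
    K 0 = M ∧ (∀ i, Module.Finite R (K i)) ∧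
    (∀ i : Fin r, 1 ≤ a i ∧ 1 ≤ b i ∧ 1 ≤ n i ∧
      ReducingStep R (K i.castSucc) (K i.succ) (a i) (b i) (n i)) ∧
    P (K (Fin.last r))

/-- The reducing invariant attached to the finiteness property `P`. -/
noncomputable def ReducingDim (P : ModuleCat.{u} R → Prop) (M : ModuleCat.{u} R) : ℕ∞ :=
  sInf {n : ℕ∞ | ∃ r : ℕ, n = (r : ℕ∞) ∧ HasReducingSeq R P M r}

/-- The reducing Gorenstein dimension. -/
noncomputable def rGdim (M : ModuleCat.{u} R) : ℕ∞ :=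
  ReducingDim R (fun N => ∃ m : ℕ, GdimLE R m N) M

/-- The reducing projective dimension. -/
noncomputable def rPdim (M : ModuleCat.{u} R) : ℕ∞ :=
  ReducingDim R (fun N => ∃ m : ℕ, PdimLE R m N) M

/-- depth of a module over a local ring: `inf { i | Ext^i(k, M) ≠ 0 }`. -/
noncomputable def depth [IsLocalRing R] (M : ModuleCat.{u} R) : ℕ∞ :=
  sInf {n : ℕ∞ | ∃ i : ℕ, n = (i : ℕ∞) ∧
    ¬ ExtVanish R (R ⧸ IsLocalRing.maximalIdeal R) M i}

/-- maximal Cohen-Macaulay: depth equals the Krull dimension of the ring. -/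
def IsMCM [IsLocalRing R] (M : ModuleCat.{u} R) : Prop :=
  (depth R M : WithBot ℕ∞) = ringKrullDim R

/-- torsion-free: every non zero-divisor of `R` is a non zero-divisor on `M`. -/
def IsTorsionFreeModule (M : Type u) [AddCommGroup M] [Module R M] : Prop :=
  ∀ r ∈ nonZeroDivisors R, ∀ m : M, r • m = 0 → m = 0

/-!
Write `k` for the residue field. Finite injective dimension and `depth M ≥ d - 1` force
`Ext^i(M, M) = 0` for `i ≥ 2`. Hence along a reducing sequence every `K_i` still satisfies
`Ext^j(K_i, M) = 0` for `j ≥ 2` and contains `M` as a direct summand: a retraction `K_{i-1} → M`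
extends to `K_i` because `Ext^1(Ω^n K_{i-1}, M) = 0`.

So `M` is a retract of a module `G` of Gorenstein dimension at most some `m`. Since `M` has finite
injective dimension, it is right orthogonal to the totally reflexive modules, and therefore every
map `G → M` induces zero on `Ext^i(-, Y)` for `i > m`; applied to the retraction this gives
`pd M ≤ m`. As `Ext^i(M, M) = 0` for `i ≥ 2`, and `Ext^p(M, N) ≠ 0` for `p = pd M` and any nonzero
finitely generated `N`, in fact `pd M ≤ 1`.

Finally, for `pd M ≤ 1`, Nakayama's lemma shows that `Ext^i(X, M) = 0` implies `Ext^i(X, R) = 0`,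
so that `R` inherits finite injective dimension from `M`.
-/

section AbelianCategory

universe v w

variable {C : Type*} [Category.{v} C] [Abelian C] [HasExt.{w} C] {S : ShortComplex C}

lemma contravariant_subsingleton_ext₁ (hS : S.ShortExact) {Y : C} {n : ℕ}
    (h₂ : Subsingleton (Abelian.Ext S.X₂ Y n)) (h₃ : Subsingleton (Abelian.Ext S.X₃ Y (n + 1))) :
    Subsingleton (Abelian.Ext S.X₁ Y n) := by
  refine subsingleton_of_forall_eq 0 fun e => ?_
  obtain ⟨x, rfl⟩ :=
    Abelian.Ext.contravariant_sequence_exact₁ hS Y e (add_comm 1 n) (h₃.elim _ _)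
  rw [h₂.elim x 0, Abelian.Ext.comp_zero]

lemma contravariant_subsingleton_ext₂ (hS : S.ShortExact) {Y : C} {n : ℕ}
    (h₁ : Subsingleton (Abelian.Ext S.X₁ Y n)) (h₃ : Subsingleton (Abelian.Ext S.X₃ Y n)) :
    Subsingleton (Abelian.Ext S.X₂ Y n) := by
  refine subsingleton_of_forall_eq 0 fun e => ?_
  obtain ⟨x, rfl⟩ := Abelian.Ext.contravariant_sequence_exact₂ hS Y e (h₁.elim _ _)
  rw [h₃.elim x 0, Abelian.Ext.comp_zero]

lemma contravariant_subsingleton_ext₃ (hS : S.ShortExact) {Y : C} {n : ℕ}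
    (h₁ : Subsingleton (Abelian.Ext S.X₁ Y n)) (h₂ : Subsingleton (Abelian.Ext S.X₂ Y (n + 1))) :
    Subsingleton (Abelian.Ext S.X₃ Y (n + 1)) := by
  refine subsingleton_of_forall_eq 0 fun e => ?_
  obtain ⟨x, rfl⟩ :=
    Abelian.Ext.contravariant_sequence_exact₃ hS Y e (h₂.elim _ _) (add_comm 1 n)
  rw [h₁.elim x 0, Abelian.Ext.comp_zero]

lemma covariant_subsingleton_ext₃ (hS : S.ShortExact) {X : C} {n : ℕ}
    (h₁ : Subsingleton (Abelian.Ext X S.X₁ (n + 1))) (h₂ : Subsingleton (Abelian.Ext X S.X₂ n)) :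
    Subsingleton (Abelian.Ext X S.X₃ n) := by
  refine subsingleton_of_forall_eq 0 fun e => ?_
  obtain ⟨x, rfl⟩ := Abelian.Ext.covariant_sequence_exact₃ X hS e rfl (h₁.elim _ _)
  rw [h₂.elim x 0, Abelian.Ext.zero_comp]

lemma exists_f_comp_eq_of_subsingleton_ext (hS : S.ShortExact) {Y : C}
    (h : Subsingleton (Abelian.Ext S.X₃ Y 1)) (φ : S.X₁ ⟶ Y) : ∃ ψ : S.X₂ ⟶ Y, S.f ≫ ψ = φ := by
  obtain ⟨x, hx⟩ := Abelian.Ext.contravariant_sequence_exact₁ hS Y (Abelian.Ext.mk₀ φ)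
    (add_zero 1) (h.elim _ _)
  obtain ⟨ψ, rfl⟩ := (Abelian.Ext.mk₀_bijective S.X₂ Y).surjective x
  exact ⟨ψ, (Abelian.Ext.mk₀_bijective S.X₁ Y).injective (by
    rwa [Abelian.Ext.mk₀_comp_mk₀] at hx)⟩

lemma subsingleton_ext_one_of_exists_f_comp_eq (hS : S.ShortExact) {Y : C}
    (h₂ : Subsingleton (Abelian.Ext S.X₂ Y 1))
    (h : ∀ φ : S.X₁ ⟶ Y, ∃ ψ : S.X₂ ⟶ Y, S.f ≫ ψ = φ) :
    Subsingleton (Abelian.Ext S.X₃ Y 1) := by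
  refine subsingleton_of_forall_eq 0 fun e => ?_
  obtain ⟨x, rfl⟩ :=
    Abelian.Ext.contravariant_sequence_exact₃ hS Y e (h₂.elim _ _) (add_zero 1)
  obtain ⟨φ, rfl⟩ := (Abelian.Ext.mk₀_bijective S.X₁ Y).surjective x
  obtain ⟨ψ, rfl⟩ := h φ
  rw [← Abelian.Ext.mk₀_comp_mk₀]
  exact hS.extClass_comp_assoc _

lemma subsingleton_ext_one_of_exists_comp_g_eq (hS : S.ShortExact) {X : C}
    (h₂ : Subsingleton (Abelian.Ext X S.X₂ 1))
    (h : ∀ φ : X ⟶ S.X₃, ∃ ψ : X ⟶ S.X₂, ψ ≫ S.g = φ) :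
    Subsingleton (Abelian.Ext X S.X₁ 1) := by
  refine subsingleton_of_forall_eq 0 fun e => ?_
  obtain ⟨x, rfl⟩ := Abelian.Ext.covariant_sequence_exact₁ X hS e (h₂.elim _ _) (zero_add 1)
  obtain ⟨φ, rfl⟩ := (Abelian.Ext.mk₀_bijective X S.X₃).surjective x
  obtain ⟨ψ, rfl⟩ := h φ
  rw [← Abelian.Ext.mk₀_comp_mk₀, Abelian.Ext.comp_assoc_of_second_deg_zero, hS.comp_extClass,
    Abelian.Ext.comp_zero]

lemma mk₀_τ₃_comp_eq_zero {S' : ShortComplex C} (hS : S.ShortExact) (hS' : S'.ShortExact)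
    (τ : S ⟶ S') {Y : C} {n : ℕ} (h₂ : Subsingleton (Abelian.Ext S'.X₂ Y (n + 1)))
    (h₁ : ∀ e : Abelian.Ext S'.X₁ Y n, (Abelian.Ext.mk₀ τ.τ₁).comp e (zero_add n) = 0)
    (e : Abelian.Ext S'.X₃ Y (n + 1)) :
    (Abelian.Ext.mk₀ τ.τ₃).comp e (zero_add (n + 1)) = 0 := by
  obtain ⟨x, rfl⟩ :=
    Abelian.Ext.contravariant_sequence_exact₃ hS' Y e (h₂.elim _ _) (add_comm 1 n)
  rw [← Abelian.Ext.comp_assoc _ _ _ (zero_add 1) (add_comm 1 n) (by omega),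
    ← ShortComplex.ShortExact.extClass_naturality hS hS' τ,
    Abelian.Ext.comp_assoc_of_second_deg_zero, h₁, Abelian.Ext.comp_zero]

lemma eq_zero_of_mk₀_retract_comp_eq_zero {A B Y : C} (r : Retract A B) {n : ℕ}
    {e : Abelian.Ext A Y n} (he : (Abelian.Ext.mk₀ r.r).comp e (zero_add n) = 0) : e = 0 := by
  rw [← Abelian.Ext.mk₀_id_comp e, ← r.retract, ← Abelian.Ext.mk₀_comp_mk₀_assoc, he,
    Abelian.Ext.comp_zero]

lemma subsingleton_ext_of_retract_left {A B Y : C} (r : Retract A B) {n : ℕ}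
    (h : Subsingleton (Abelian.Ext B Y n)) : Subsingleton (Abelian.Ext A Y n) :=
  subsingleton_of_forall_eq 0 fun _ => eq_zero_of_mk₀_retract_comp_eq_zero r (h.elim _ _)

lemma subsingleton_ext_of_retract_right {X A B : C} (r : Retract A B) {n : ℕ}
    (h : Subsingleton (Abelian.Ext X B n)) : Subsingleton (Abelian.Ext X A n) := by
  refine subsingleton_of_forall_eq 0 fun e => ?_
  rw [← Abelian.Ext.comp_mk₀_id e, ← r.retract, ← Abelian.Ext.mk₀_comp_mk₀,
    ← Abelian.Ext.comp_assoc_of_third_deg_zero, h.elim (e.comp _ _) 0, Abelian.Ext.zero_comp]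

lemma nonempty_retract_X₂ (hS : S.ShortExact) {M : C} (r : Retract M S.X₁)
    (h : Subsingleton (Abelian.Ext S.X₃ M 1)) : Nonempty (Retract M S.X₂) := by
  obtain ⟨ψ, hψ⟩ := exists_f_comp_eq_of_subsingleton_ext hS h r.r
  exact ⟨⟨r.i ≫ S.f, ψ, by rw [Category.assoc, hψ, r.retract]⟩⟩

end AbelianCategory

section ExtVanish

variable {R}
variable {X Y : Type u} [AddCommGroup X] [Module R X] [AddCommGroup Y] [Module R Y] {n : ℕ}

-- `n - 1` is truncated on purpose: in degree `0` the differential `d 0 0` is zero.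
lemma extVanish_iff_forall_exists_d_comp_eq (P : ProjectiveResolution (ModuleCat.of R X)) :
    ExtVanish R X Y n ↔ ∀ f : P.complex.X n ⟶ ModuleCat.of R Y, P.complex.d (n + 1) n ≫ f = 0 →
      ∃ g : P.complex.X (n - 1) ⟶ ModuleCat.of R Y, P.complex.d n (n - 1) ≫ g = f := by
  have hprev : (ComplexShape.up ℕ).prev n = n - 1 := by cases n <;> simp
  rw [ExtVanish, ← ModuleCat.isZero_iff_subsingleton, (P.isoExt n (ModuleCat.of R Y)).isZero_iff,
    ← HomologicalComplex.exactAt_iff_isZero_homology,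
    HomologicalComplex.exactAt_iff' _ (n - 1) n (n + 1) hprev (by simp),
    ShortComplex.moduleCat_exact_iff]
  rfl

lemma ExtVanish.subsingleton_ext (h : ExtVanish R X Y n) :
    Subsingleton (Abelian.Ext (ModuleCat.of R X) (ModuleCat.of R Y) n) := by
  let P := projectiveResolution (ModuleCat.of R X)
  refine subsingleton_of_forall_eq 0 fun e => ?_
  obtain ⟨f, hf, rfl⟩ := P.extMk_surjective e (n + 1) rfl
  obtain ⟨g, rfl⟩ := (extVanish_iff_forall_exists_d_comp_eq P).1 h f hf
  cases n with
  | zero => simp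
  | succ n => exact (P.extMk_eq_zero_iff _ _ rfl hf n rfl).2 ⟨g, rfl⟩

lemma extVanish_succ_of_subsingleton_ext
    (h : Subsingleton (Abelian.Ext (ModuleCat.of R X) (ModuleCat.of R Y) (n + 1))) :
    ExtVanish R X Y (n + 1) := by
  let P := projectiveResolution (ModuleCat.of R X)
  exact (extVanish_iff_forall_exists_d_comp_eq P).2 fun f hf =>
    (P.extMk_eq_zero_iff f _ rfl hf n rfl).1 (h.elim _ _)

end ExtVanish

section ShortExact

variable {R}
variable {A B C : Type u} [AddCommGroup A] [Module R A] [AddCommGroup B] [Module R B]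
  [AddCommGroup C] [Module R C] {f : A →ₗ[R] B} {g : B →ₗ[R] C}

/-- A short exact sequence of modules as a short complex in `ModuleCat R`. -/
abbrev IsShortExact.shortComplex (h : IsShortExact R f g) : ShortComplex (ModuleCat.{u} R) :=
  ModuleCat.shortComplexOfCompEqZero f g h.2.2.linearMap_comp_eq_zero

lemma IsShortExact.shortExact (h : IsShortExact R f g) : h.shortComplex.ShortExact :=
  ModuleCat.shortComplex_shortExact _ h.2.2 h.1 h.2.1

lemma isShortExact_subtype_ker (hg : Function.Surjective g) :
    IsShortExact R (LinearMap.ker g).subtype g :=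
  ⟨Submodule.injective_subtype _, hg, LinearMap.exact_subtype_ker_map g⟩

lemma isShortExact_subtype_mkQ (N : Submodule R A) : IsShortExact R N.subtype N.mkQ :=
  ⟨N.injective_subtype, N.mkQ_surjective, LinearMap.exact_subtype_mkQ N⟩

lemma isShortExact_mkQ_range (hf : Function.Injective f) :
    IsShortExact R f (LinearMap.range f).mkQ :=
  ⟨hf, Submodule.mkQ_surjective _, LinearMap.exact_map_mkQ_range f⟩

end ShortExact

section ModuleExt

variable {R}

lemma subsingleton_ext_of_module_projective {P Y : ModuleCat.{u} R} [Module.Projective R P]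
    (n : ℕ) : Subsingleton (Abelian.Ext P Y (n + 1)) := by
  have : Projective P := (IsProjective.iff_projective P).1 ‹_›
  exact Abelian.Ext.subsingleton_of_projective P Y n

lemma subsingleton_ext_pi_left {ι : Type} [Finite ι] {K Y : ModuleCat.{u} R} {n : ℕ}
    (h : Subsingleton (Abelian.Ext K Y n)) :
    Subsingleton (Abelian.Ext (ModuleCat.of R (ι → K)) Y n) := by
  have := Fintype.ofFinite ι
  have e := Abelian.Ext.biproductAddEquiv (Limits.biproduct.isBilimit fun _ : ι => K) Y n
  exact subsingleton_ext_of_retract_left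
    (ModuleCat.biproductIsoPi fun _ : ι => K).symm.retract e.toEquiv.subsingleton

lemma subsingleton_ext_pi_right {ι : Type} [Finite ι] {X K : ModuleCat.{u} R} {n : ℕ}
    (h : Subsingleton (Abelian.Ext X K n)) :
    Subsingleton (Abelian.Ext X (ModuleCat.of R (ι → K)) n) := by
  have := Fintype.ofFinite ι
  have e := Abelian.Ext.addEquivBiproduct X (Limits.biproduct.isBilimit fun _ : ι => K) n
  exact subsingleton_ext_of_retract_right
    (ModuleCat.biproductIsoPi fun _ : ι => K).symm.retract e.toEquiv.subsingleton

end ModuleExt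

section InjectiveDimension

variable {R}

lemma exists_isShortExact_injective (M : ModuleCat.{u} R) :
    ∃ (I C : ModuleCat.{u} R) (f : M →ₗ[R] I) (g : I →ₗ[R] C),
      Module.Injective R I ∧ IsShortExact R f g :=
  ⟨Injective.under M, ModuleCat.of R (_ ⧸ LinearMap.range (Injective.ι M).hom),
    (Injective.ι M).hom, Submodule.mkQ _,
    (Module.injective_iff_injective_object R _).2 (inferInstanceAs (Injective (Injective.under M))),
    isShortExact_mkQ_range ((ModuleCat.mono_iff_injective (Injective.ι M)).1 inferInstance)⟩

lemma IsShortExact.hasInjectiveDimensionLT_iff {A I C : ModuleCat.{u} R} {f : A →ₗ[R] I}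
    {g : I →ₗ[R] C} (h : IsShortExact R f g) (hI : Module.Injective R I) (n : ℕ) :
    HasInjectiveDimensionLT C (n + 1) ↔ HasInjectiveDimensionLT A (n + 2) :=
  h.shortExact.hasInjectiveDimensionLT_X₃_iff n ((Module.injective_iff_injective_object R I).1 hI)

lemma injdimLE_iff {n : ℕ} {M : ModuleCat.{u} R} :
    InjdimLE R n M ↔ HasInjectiveDimensionLE M n := by
  induction n generalizing M with
  | zero =>
    exact (Module.injective_iff_injective_object R M).trans
      injective_iff_hasInjectiveDimensionLT_one
  | succ n ih =>
    constructor
    · rintro ⟨I, C, f, g, hI, hfg, hC⟩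
      exact (hfg.hasInjectiveDimensionLT_iff hI n).1 (ih.1 hC)
    · intro hM
      obtain ⟨I, C, f, g, hI, hfg⟩ := exists_isShortExact_injective M
      exact ⟨I, C, f, g, hI, hfg, ih.2 ((hfg.hasInjectiveDimensionLT_iff hI n).2 hM)⟩

lemma hasInjectiveDimensionLE_of_subsingleton_ext_quotient {n : ℕ} {M : ModuleCat.{u} R}
    (h : ∀ I : Ideal R, Subsingleton (Abelian.Ext (ModuleCat.of R (R ⧸ I)) M (n + 1))) :
    HasInjectiveDimensionLE M n := by
  induction n generalizing M with
  | zero =>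
    refine injdimLE_iff.1 (Module.Baer.injective fun I φ => ?_)
    obtain ⟨ψ, hψ⟩ := exists_f_comp_eq_of_subsingleton_ext (isShortExact_subtype_mkQ I).shortExact
      (h I) (ModuleCat.ofHom φ)
    exact ⟨ψ.hom, fun x hx => congr($hψ ⟨x, hx⟩)⟩
  | succ n ih =>
    obtain ⟨I, C, f, g, hI, hfg⟩ := exists_isShortExact_injective M
    have : Injective I := (Module.injective_iff_injective_object R I).1 hI
    exact (hfg.hasInjectiveDimensionLT_iff hI n).1 <| ih fun J =>
      covariant_subsingleton_ext₃ hfg.shortExact (h J) (Abelian.Ext.subsingleton_of_injective _ I n)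

end InjectiveDimension

section Local

open IsLocalRing

variable {R}

lemma mk₀_smul_id_comp (x : R) {X Y : ModuleCat.{u} R} {n : ℕ} (e : Abelian.Ext X Y n) :
    (Abelian.Ext.mk₀ (x • 𝟙 X)).comp e (zero_add n) = x • e := by
  rw [Abelian.Ext.mk₀_smul, Abelian.Ext.smul_comp, Abelian.Ext.mk₀_id_comp]

lemma isSMulRegular_quotient_of_notMem {p : Ideal R} [p.IsPrime] {x : R} (hx : x ∉ p) :
    IsSMulRegular (R ⧸ p) x :=
  (isSMulRegular_quotient_iff_mem_of_smul_mem p x).2 fun _ h =>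
    (Ideal.IsPrime.mem_or_mem ‹_› h).resolve_left hx

variable [IsLocalRing R]

lemma subsingleton_of_forall_mem_maximalIdeal_smul {E : Type*} [AddCommGroup E] [Module R E]
    [Module.Finite R E] (h : ∀ e : E, e ∈ maximalIdeal R • (⊤ : Submodule R E)) :
    Subsingleton E :=
  (Submodule.subsingleton_iff R).1 <| subsingleton_of_bot_eq_top <| Eq.symm <|
    Submodule.eq_bot_of_le_smul_of_le_jacobson_bot (maximalIdeal R) _ Module.Finite.fg_top
      (fun e _ => h e) (maximalIdeal_le_jacobson _)

lemma injective_of_residue_ne_zero {N : Type*} [AddCommGroup N] [Module R N]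
    {f : (R ⧸ maximalIdeal R) →ₗ[R] N} (hf : f ≠ 0) : Function.Injective f := by
  have : IsSimpleModule R (R ⧸ maximalIdeal R) :=
    isSimpleModule_iff_isCoatom.2 (Ideal.isMaximal_def.1 inferInstance)
  exact (LinearMap.injective_or_eq_zero f).resolve_right hf

lemma exists_surjective_to_residue (M : Type*) [AddCommGroup M] [Module R M] [Module.Finite R M]
    [Nontrivial M] : ∃ q : M →ₗ[R] (R ⧸ maximalIdeal R), Function.Surjective q := by
  obtain ⟨N, hN, _⟩ := (eq_top_or_exists_le_coatom (⊥ : Submodule R M)).resolve_left bot_ne_top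
  have : IsSimpleModule R (M ⧸ N) := isSimpleModule_iff_isCoatom.2 hN
  obtain ⟨I, hI, ⟨e⟩⟩ := isSimpleModule_iff_quot_maximal.1 this
  rw [IsLocalRing.eq_maximalIdeal hI] at e
  exact ⟨e.toLinearMap ∘ₗ N.mkQ, e.surjective.comp N.mkQ_surjective⟩

variable [IsNoetherianRing R]

lemma exists_isSMulRegular_of_subsingleton_residue_hom {N : Type*} [AddCommGroup N] [Module R N]
    [Module.Finite R N] (h : Subsingleton ((R ⧸ maximalIdeal R) →ₗ[R] N)) :
    ∃ x ∈ maximalIdeal R, IsSMulRegular N x := by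
  obtain ⟨x, hx, hreg⟩ := IsSMulRegular.subsingleton_linearMap_iff.1 h
  rw [Ideal.annihilator_quotient] at hx
  exact ⟨x, hx, hreg⟩

lemma subsingleton_ext_of_isSMulRegular {X Y : ModuleCat.{u} R} [Module.Finite R X]
    [Module.Finite R Y] {n : ℕ} {x : R} (hx : x ∈ maximalIdeal R) (hreg : IsSMulRegular X x)
    (h : Subsingleton (Abelian.Ext (ModuleCat.of R (QuotSMulTop x X)) Y (n + 1))) :
    Subsingleton (Abelian.Ext X Y n) := by
  refine subsingleton_of_forall_mem_maximalIdeal_smul (R := R) fun e => ?_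
  obtain ⟨e', rfl⟩ := Abelian.Ext.contravariant_sequence_exact₁ hreg.smulShortComplex_shortExact
    Y e (add_comm 1 n) (h.elim _ _)
  have hsmul := mk₀_smul_id_comp (X := X) x e'
  rw [← ModuleCat.smulShortComplex_f_eq_smul_id] at hsmul
  exact hsmul ▸ Submodule.smul_mem_smul hx trivial

lemma exists_residue_hom_injective_of_supportDim_lt {s c : ℕ} (N : ModuleCat.{u} R)
    [Module.Finite R N] [Nontrivial N] [hN : HasProjectiveDimensionLT N (c + 1)]
    (hs : Module.supportDim R N < s) :
    ∃ (N' : ModuleCat.{u} R) (f : (R ⧸ maximalIdeal R) →ₗ[R] N'),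
      Function.Injective f ∧ Module.Finite R N' ∧ HasProjectiveDimensionLT N' (c + s) := by
  induction s generalizing c N with
  | zero =>
    obtain ⟨m, hm⟩ := WithBot.ne_bot_iff_exists.1 (Module.supportDim_ne_bot_of_nontrivial R N)
    rw [← hm] at hs
    exact absurd hs (not_lt.2 (WithBot.coe_le_coe.2 (zero_le (a := (m : ℕ∞)))))
  | succ s ih =>
    by_cases hk : Subsingleton ((R ⧸ maximalIdeal R) →ₗ[R] N)
    · obtain ⟨x, hx, hreg⟩ := exists_isSMulRegular_of_subsingleton_residue_hom hk
      have hdim := Module.supportDim_quotSMulTop_succ_eq_supportDim hreg hx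
      have : Nontrivial (QuotSMulTop x N) := by
        refine (Module.supportDim_ne_bot_iff_nontrivial R _).1 fun hbot => ?_
        rw [hbot, WithBot.bot_add] at hdim
        exact Module.supportDim_ne_bot_of_nontrivial R N hdim.symm
      have : HasProjectiveDimensionLT (ModuleCat.of R (QuotSMulTop x N)) (c + 1 + 1) :=
        hreg.smulShortComplex_shortExact.hasProjectiveDimensionLT_X₃ (c + 1) hN
          (hasProjectiveDimensionLT_of_ge N (c + 1) (c + 2) (by omega))
      have hlt : Module.supportDim R (QuotSMulTop x N) < s := by
        rw [← hdim] at hs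
        push_cast at hs
        exact lt_of_add_lt_add_right hs
      obtain ⟨N', f, hf, hfin, hN'⟩ := ih (c := c + 1) (ModuleCat.of R (QuotSMulTop x N)) hlt
      exact ⟨N', f, hf, hfin, by rwa [show c + (s + 1) = c + 1 + s by omega]⟩
    · obtain ⟨f, hf⟩ := @exists_ne _ (not_subsingleton_iff_nontrivial.1 hk) 0
      exact ⟨N, f, injective_of_residue_ne_zero hf, inferInstance,
        hasProjectiveDimensionLT_of_ge N (c + 1) _ (by omega)⟩

lemma exists_residue_hom_injective {d : ℕ} (hd : ringKrullDim R ≤ d) :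
    ∃ (N : ModuleCat.{u} R) (f : (R ⧸ maximalIdeal R) →ₗ[R] N),
      Function.Injective f ∧ Module.Finite R N ∧ HasProjectiveDimensionLE N d := by
  have : HasProjectiveDimensionLT (ModuleCat.of R R) (0 + 1) :=
    projective_iff_hasProjectiveDimensionLT_one.1
      ((IsProjective.iff_projective _).1 (inferInstanceAs (Module.Projective R R)))
  have hlt : Module.supportDim R R < (d + 1 : ℕ) := by
    rw [Module.supportDim_self_eq_ringKrullDim]
    exact hd.trans_lt (by exact_mod_cast d.lt_succ_self)
  simpa only [Nat.zero_add] using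
    exists_residue_hom_injective_of_supportDim_lt (c := 0) (ModuleCat.of R R) hlt

lemma subsingleton_ext_of_subsingleton_ext_residue {M : ModuleCat.{u} R} [Module.Finite R M]
    {n : ℕ} (hM : HasInjectiveDimensionLT M (n + 2))
    (hk : Subsingleton (Abelian.Ext (ModuleCat.of R (R ⧸ maximalIdeal R)) M (n + 1)))
    (X : ModuleCat.{u} R) [hX : Module.Finite R X] : Subsingleton (Abelian.Ext X M (n + 1)) := by
  refine IsNoetherianRing.induction_on_isQuotientEquivQuotientPrime R hX
    (motive := fun X _ _ _ => Subsingleton (Abelian.Ext (ModuleCat.of R X) M (n + 1)))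
    (fun X _ _ _ _ => ?_) (fun X _ _ _ p e => ?_) (fun A _ _ _ B _ _ _ C _ _ _ f g hf hg hfg => ?_)
  · have : Module.Projective R (ModuleCat.of R X) := Module.Projective.of_free
    exact subsingleton_ext_of_module_projective n
  · refine subsingleton_ext_of_retract_left e.toModuleIso.retract ?_
    by_cases hp : p.1 = maximalIdeal R
    · rwa [hp]
    · obtain ⟨x, hx, hxp⟩ := SetLike.exists_of_lt ((le_maximalIdeal p.2.ne_top).lt_of_ne hp)
      have := p.2
      exact subsingleton_ext_of_isSMulRegular hx (isSMulRegular_quotient_of_notMem hxp)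
        (HasInjectiveDimensionLT.subsingleton M (n + 2) (n + 2) le_rfl _)
  · exact contravariant_subsingleton_ext₂ (IsShortExact.shortExact ⟨hf, hg, hfg⟩)

lemma hasInjectiveDimensionLE_of_ringKrullDim_le {d n : ℕ} (hd : ringKrullDim R ≤ d)
    (M : ModuleCat.{u} R) [Module.Finite R M] (hM : HasInjectiveDimensionLE M n) :
    HasInjectiveDimensionLE M d := by
  obtain ⟨N, f, hf, _, _⟩ := exists_residue_hom_injective hd
  induction n with
  | zero =>
    have : HasInjectiveDimensionLT M 1 := hM
    exact hasInjectiveDimensionLT_of_ge M 1 (d + 1) (by omega)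
  | succ n ih =>
    have : HasInjectiveDimensionLT M (n + 2) := hM
    rcases le_or_gt (n + 1) d with hnd | hdn
    · exact hasInjectiveDimensionLT_of_ge M (n + 2) (d + 1) (by omega)
    · have hk : Subsingleton (Abelian.Ext (ModuleCat.of R (R ⧸ maximalIdeal R)) M (n + 1)) :=
        contravariant_subsingleton_ext₁ (isShortExact_mkQ_range hf).shortExact
          (HasProjectiveDimensionLT.subsingleton N (d + 1) (n + 1) (by omega) M)
          (HasInjectiveDimensionLT.subsingleton M (n + 2) (n + 2) le_rfl _)
      exact ih (hasInjectiveDimensionLE_of_subsingleton_ext_quotient fun I =>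
        subsingleton_ext_of_subsingleton_ext_residue hM hk _)

-- Ischebeck's theorem, with the depth of `N` expressed by the vanishing of `Ext^i(k, N)`.
lemma subsingleton_ext_of_subsingleton_ext_residue_lt {d n : ℕ} {N M : ModuleCat.{u} R}
    [Module.Finite R N] [Module.Finite R M] (hM : HasInjectiveDimensionLT M (d + 1))
    (hN : ∀ i < n, Subsingleton (Abelian.Ext (ModuleCat.of R (R ⧸ maximalIdeal R)) N i))
    {i : ℕ} (hi : d < i + n) : Subsingleton (Abelian.Ext N M i) := by
  induction n generalizing N i with
  | zero => exact HasInjectiveDimensionLT.subsingleton M (d + 1) i (by omega) N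
  | succ n ih =>
    have hk : Subsingleton ((R ⧸ maximalIdeal R) →ₗ[R] N) :=
      have := hN 0 (by omega)
      ((ModuleCat.homEquiv (M := ModuleCat.of R (R ⧸ maximalIdeal R)) (N := N)).symm.trans
        Abelian.Ext.homEquiv₀.symm).subsingleton
    obtain ⟨x, hx, hreg⟩ := exists_isSMulRegular_of_subsingleton_residue_hom hk
    refine subsingleton_ext_of_isSMulRegular hx hreg (ih (fun j hj => ?_) (by omega))
    exact covariant_subsingleton_ext₃ hreg.smulShortComplex_shortExact
      (hN (j + 1) (by omega)) (hN j (by omega))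

end Local

section ProjectiveDimension

open IsLocalRing

variable {R}

lemma comp_mk₀_mem_smul_top {I : Ideal R} {X P : ModuleCat.{u} R} [Module.Finite R P]
    [Module.Projective R P] {φ : P →ₗ[R] R} (hφ : ∀ x, φ x ∈ I) {i : ℕ} (e : Abelian.Ext X P i) :
    e.comp (Abelian.Ext.mk₀ (ModuleCat.ofHom φ)) (add_zero i) ∈
      I • (⊤ : Submodule R (Abelian.Ext X (ModuleCat.of R R) i)) := by
  obtain ⟨n, p, s, -, -, hps⟩ := Module.Finite.exists_comp_eq_id_of_projective R P
  let b := Pi.basisFun R (Fin n)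
  have hsum : ModuleCat.ofHom φ = ∑ j, φ (p (b j)) • ModuleCat.ofHom (b.coord j ∘ₗ s) := by
    ext x
    have hx : φ x = (φ ∘ₗ p) (s x) := congrArg φ (LinearMap.congr_fun hps x).symm
    rw [← b.sum_dual_apply_smul_coord (φ ∘ₗ p)] at hx
    simpa [ModuleCat.hom_sum] using hx
  rw [hsum, Abelian.Ext.mk₀_sum, Abelian.Ext.comp_sum]
  refine Submodule.sum_mem _ fun j _ => ?_
  rw [Abelian.Ext.mk₀_smul, Abelian.Ext.comp_smul]
  exact Submodule.smul_mem_smul (hφ _) trivial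

lemma hasProjectiveDimensionLE_zero_iff {P : ModuleCat.{u} R} :
    HasProjectiveDimensionLE P 0 ↔ Module.Projective R P :=
  projective_iff_hasProjectiveDimensionLT_one.symm.trans (IsProjective.iff_projective P).symm

lemma exists_comp_mk₀_eq_of_surjective {X Y Z : ModuleCat.{u} R} {i : ℕ}
    [HasProjectiveDimensionLT X (i + 1)] {f : Y →ₗ[R] Z} (hf : Function.Surjective f)
    (e : Abelian.Ext X Z i) :
    ∃ x : Abelian.Ext X Y i, x.comp (Abelian.Ext.mk₀ (ModuleCat.ofHom f)) (add_zero i) = e :=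
  Abelian.Ext.covariant_sequence_exact₃ X (isShortExact_subtype_ker hf).shortExact e rfl
    ((HasProjectiveDimensionLT.subsingleton X (i + 1) (i + 1) le_rfl _).elim _ _)

lemma subsingleton_ext_of_surjective {X Y Z : ModuleCat.{u} R} {i : ℕ}
    [HasProjectiveDimensionLT X (i + 1)] {f : Y →ₗ[R] Z} (hf : Function.Surjective f)
    (hY : Subsingleton (Abelian.Ext X Y i)) : Subsingleton (Abelian.Ext X Z i) :=
  covariant_subsingleton_ext₃ (isShortExact_subtype_ker hf).shortExact
    (HasProjectiveDimensionLT.subsingleton X (i + 1) (i + 1) le_rfl _) hY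

variable [IsLocalRing R]

lemma exists_surjective_dual_mem_maximalIdeal_of_mem_ker {P M : Type*} [AddCommGroup P]
    [Module R P] [Module.Projective R P] [AddCommGroup M] [Module R M] [Module.Finite R M]
    [Nontrivial M] {p : P →ₗ[R] M} (hp : Function.Surjective p) :
    ∃ l : P →ₗ[R] R, Function.Surjective l ∧ ∀ x ∈ LinearMap.ker p, l x ∈ maximalIdeal R := by
  obtain ⟨q, hq⟩ := exists_surjective_to_residue (R := R) M
  obtain ⟨l, hl⟩ := Module.projective_lifting_property (maximalIdeal R).mkQ (q ∘ₗ p)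
    (Submodule.mkQ_surjective _)
  have hmem : ∀ x, l x ∈ maximalIdeal R ↔ q (p x) = 0 := fun x => by
    rw [← LinearMap.comp_apply q, ← hl]
    exact (Submodule.Quotient.mk_eq_zero _).symm
  refine ⟨l, LinearMap.range_eq_top.1 (by_contra fun hl => ?_), fun x hx => ?_⟩
  · obtain ⟨y, hy⟩ := exists_ne (0 : R ⧸ maximalIdeal R)
    obtain ⟨x, rfl⟩ := hq.comp hp y
    exact hy ((hmem x).1 (le_maximalIdeal hl ⟨x, rfl⟩))
  · rw [hmem, LinearMap.mem_ker.1 hx, map_zero]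

variable [IsNoetherianRing R]

lemma subsingleton_ext_self_of_subsingleton_ext_residue {X : ModuleCat.{u} R} [Module.Finite R X]
    {i : ℕ} [HasProjectiveDimensionLT X (i + 1)]
    (hk : Subsingleton (Abelian.Ext X (ModuleCat.of R (R ⧸ maximalIdeal R)) i)) :
    Subsingleton (Abelian.Ext X (ModuleCat.of R R) i) := by
  refine subsingleton_of_forall_mem_maximalIdeal_smul (R := R) fun e => ?_
  obtain ⟨e₁, rfl⟩ := Abelian.Ext.covariant_sequence_exact₂ X
    (isShortExact_subtype_mkQ (maximalIdeal R)).shortExact e (hk.elim _ _)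
  obtain ⟨n, p, hp⟩ := Module.Finite.exists_fin' R (maximalIdeal R)
  obtain ⟨e₂, rfl⟩ := exists_comp_mk₀_eq_of_surjective
    (Y := ModuleCat.of R (Fin n → R)) (Z := ModuleCat.of R (maximalIdeal R)) hp e₁
  have := comp_mk₀_mem_smul_top (P := ModuleCat.of R (Fin n → R))
    (φ := (maximalIdeal R).subtype ∘ₗ p) (fun v => (p v).2) e₂
  rw [ModuleCat.ofHom_comp, ← Abelian.Ext.mk₀_comp_mk₀,
    ← Abelian.Ext.comp_assoc_of_third_deg_zero] at this
  exact this

lemma hasProjectiveDimensionLT_of_subsingleton_ext {X Y : ModuleCat.{u} R} [Module.Finite R X]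
    [Module.Finite R Y] [Nontrivial Y] {i : ℕ} [HasProjectiveDimensionLT X (i + 1)]
    (h : Subsingleton (Abelian.Ext X Y i)) : HasProjectiveDimensionLT X i := by
  obtain ⟨q, hq⟩ := exists_surjective_to_residue (R := R) Y
  have hR := subsingleton_ext_self_of_subsingleton_ext_residue
    (subsingleton_ext_of_surjective (Z := ModuleCat.of R (R ⧸ maximalIdeal R)) hq h)
  refine ModuleCat.hasProjectiveDimensionLT_of_forall_finite X i fun Z _ => ?_
  obtain ⟨n, p, hp⟩ := Module.Finite.exists_fin' R Z
  exact subsingleton_ext_of_surjective hp (subsingleton_ext_pi_right hR)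

lemma hasProjectiveDimensionLT_of_forall_subsingleton_ext_self {X : ModuleCat.{u} R}
    [Module.Finite R X] [Nontrivial X] {m n : ℕ} (hX : HasProjectiveDimensionLT X m)
    (h : ∀ i, n ≤ i → Subsingleton (Abelian.Ext X X i)) : HasProjectiveDimensionLT X n := by
  induction m with
  | zero => exact hasProjectiveDimensionLT_of_ge X 0 n (Nat.zero_le n)
  | succ m ih =>
    rcases le_or_gt n m with hnm | hmn
    · exact ih (hasProjectiveDimensionLT_of_subsingleton_ext (h m hnm))
    · exact hasProjectiveDimensionLT_of_ge X (m + 1) n hmn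

-- Since `l` splits, every class in `Ext^i(X, R)` comes from `Ext^i(X, P)`, hence from
-- `Ext^i(X, ker p)`; but `l` carries `ker p` into `m`, so the class lies in `m Ext^i(X, R)`.
lemma subsingleton_ext_self_of_hasProjectiveDimensionLE_one {X M : ModuleCat.{u} R}
    [Module.Finite R X] [Module.Finite R M] [Nontrivial M] (hM : HasProjectiveDimensionLE M 1)
    {i : ℕ} (h : Subsingleton (Abelian.Ext X M i)) :
    Subsingleton (Abelian.Ext X (ModuleCat.of R R) i) := by
  obtain ⟨n, p, hp⟩ := Module.Finite.exists_fin' R M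
  have hfree : Projective (ModuleCat.of R (Fin n → R)) :=
    (IsProjective.iff_projective _).1 (inferInstanceAs (Module.Projective R (Fin n → R)))
  have hker : Module.Projective R (LinearMap.ker p) := hasProjectiveDimensionLE_zero_iff.1 <|
    ((isShortExact_subtype_ker hp).shortExact.hasProjectiveDimensionLT_X₃_iff 0 hfree).1 hM
  obtain ⟨l, hl, hlp⟩ := exists_surjective_dual_mem_maximalIdeal_of_mem_ker hp
  obtain ⟨s, hs⟩ := Module.projective_lifting_property l LinearMap.id hl
  refine subsingleton_of_forall_mem_maximalIdeal_smul (R := R) fun e => ?_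
  obtain ⟨y, hy⟩ := Abelian.Ext.covariant_sequence_exact₂ X (isShortExact_subtype_ker hp).shortExact
    (e.comp (Abelian.Ext.mk₀ (ModuleCat.ofHom s)) (add_zero i)) (h.elim _ _)
  have he : e = y.comp (Abelian.Ext.mk₀ (ModuleCat.ofHom (l ∘ₗ (LinearMap.ker p).subtype)))
      (add_zero i) := by
    rw [ModuleCat.ofHom_comp, ← Abelian.Ext.mk₀_comp_mk₀,
      ← Abelian.Ext.comp_assoc_of_third_deg_zero]
    refine Eq.trans ?_ (congrArg (fun t => Abelian.Ext.comp t _ _) hy).symm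
    rw [Abelian.Ext.comp_assoc_of_third_deg_zero, Abelian.Ext.mk₀_comp_mk₀,
      ← ModuleCat.ofHom_comp, hs]
    exact (Abelian.Ext.comp_mk₀_id e).symm
  rw [he]
  exact comp_mk₀_mem_smul_top (P := ModuleCat.of R (LinearMap.ker p)) (fun x => hlp x x.2) y

end ProjectiveDimension

section Dual

variable {R}
variable {A B C : Type u} [AddCommGroup A] [Module R A] [AddCommGroup B] [Module R B]
  [AddCommGroup C] [Module R C] {f : A →ₗ[R] B} {g : B →ₗ[R] C}

lemma IsShortExact.dual (h : IsShortExact R f g)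
    (hC : Subsingleton (Abelian.Ext (ModuleCat.of R C) (ModuleCat.of R R) 1)) :
    IsShortExact R g.dualMap f.dualMap := by
  refine ⟨LinearMap.dualMap_injective_of_surjective h.2.1, fun φ => ?_, ?_⟩
  · obtain ⟨ψ, hψ⟩ := exists_f_comp_eq_of_subsingleton_ext h.shortExact hC (ModuleCat.ofHom φ)
    exact ⟨ψ.hom, congrArg ModuleCat.Hom.hom hψ⟩
  · rw [LinearMap.exact_iff, LinearMap.range_dualMap_eq_dualAnnihilator_ker_of_surjective g h.2.1,
      h.2.2.linearMap_ker_eq, LinearMap.ker_dualMap_eq_dualAnnihilator_range]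

lemma IsShortExact.bijective_dual_eval [Module.IsReflexive R B] (h : IsShortExact R f g)
    (hC : Function.Injective (Module.Dual.eval R C)) (hf : Function.Surjective f.dualMap) :
    Function.Bijective (Module.Dual.eval R A) := by
  have hB := Module.bijective_dual_eval R B
  have hnat (a : A) : Module.Dual.eval R B (f a) = f.dualMap.dualMap (Module.Dual.eval R A a) := rfl
  refine ⟨fun a a' haa' => h.1 (hB.1 (by rw [hnat, hnat, haa'])), fun θ => ?_⟩
  obtain ⟨b, hb⟩ := hB.2 (f.dualMap.dualMap θ)
  have hgb : g b = 0 := by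
    refine hC (LinearMap.ext fun χ => ?_)
    have hχ : f.dualMap (g.dualMap χ) = 0 := by
      ext a
      simp [h.2.2.apply_apply_eq_zero]
    calc χ (g b) = θ (f.dualMap (g.dualMap χ)) := LinearMap.congr_fun hb (g.dualMap χ)
      _ = _ := by simp [hχ]
  obtain ⟨a, rfl⟩ := (h.2.2 b).1 hgb
  refine ⟨a, LinearMap.ext fun φ => ?_⟩
  obtain ⟨ψ, rfl⟩ := hf φ
  exact LinearMap.congr_fun hb ψ

end Dual

section TotallyReflexive

variable {R}

section

variable {X : Type u} [AddCommGroup X] [Module R X]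

lemma IsTotallyReflexive.isReflexive (h : IsTotallyReflexive R X) : Module.IsReflexive R X :=
  ⟨h.2.1⟩

lemma IsTotallyReflexive.subsingleton_ext (h : IsTotallyReflexive R X) (n : ℕ) :
    Subsingleton (Abelian.Ext (ModuleCat.of R X) (ModuleCat.of R R) (n + 1)) :=
  (h.2.2.1 (n + 1) (by omega)).subsingleton_ext

lemma IsTotallyReflexive.subsingleton_ext_dual (h : IsTotallyReflexive R X) (n : ℕ) :
    Subsingleton (Abelian.Ext (ModuleCat.of R (Module.Dual R X)) (ModuleCat.of R R) (n + 1)) :=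
  (h.2.2.2 (n + 1) (by omega)).subsingleton_ext

lemma IsTotallyReflexive.of_subsingleton_ext [Module.Finite R X] [Module.IsReflexive R X]
    (h : ∀ n, Subsingleton (Abelian.Ext (ModuleCat.of R X) (ModuleCat.of R R) (n + 1)))
    (h' : ∀ n, Subsingleton
      (Abelian.Ext (ModuleCat.of R (Module.Dual R X)) (ModuleCat.of R R) (n + 1))) :
    IsTotallyReflexive R X := by
  refine ⟨‹_›, Module.bijective_dual_eval R X, fun i hi => ?_, fun i hi => ?_⟩ <;>
    obtain ⟨n, rfl⟩ := Nat.exists_eq_add_of_le' hi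
  · exact extVanish_succ_of_subsingleton_ext (h n)
  · exact extVanish_succ_of_subsingleton_ext (h' n)

end

variable [IsNoetherianRing R]

lemma IsTotallyReflexive.dual {X : Type u} [AddCommGroup X] [Module R X]
    (h : IsTotallyReflexive R X) : IsTotallyReflexive R (Module.Dual R X) := by
  have := h.1
  have := h.isReflexive
  exact .of_subsingleton_ext h.subsingleton_ext_dual fun n => subsingleton_ext_of_retract_left
    (Module.evalEquiv R X).symm.toModuleIso.retract (h.subsingleton_ext n)

lemma IsTotallyReflexive.of_isShortExact {K F X : Type u} [AddCommGroup K] [Module R K]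
    [AddCommGroup F] [Module R F] [AddCommGroup X] [Module R X] {f : K →ₗ[R] F} {g : F →ₗ[R] X}
    [Module.Finite R F] [Module.Projective R F] (hX : IsTotallyReflexive R X)
    (h : IsShortExact R f g) : IsTotallyReflexive R K := by
  have hdual := h.dual (hX.subsingleton_ext 0)
  have : Module.Finite R K := Module.Finite.of_injective f h.1
  have : Module.IsReflexive R K := ⟨h.bijective_dual_eval hX.2.1.1 hdual.2.1⟩
  have : Module.Projective R (ModuleCat.of R F) := ‹_›
  have hF : Module.Projective R (ModuleCat.of R (Module.Dual R F)) :=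
    inferInstanceAs (Module.Projective R (Module.Dual R F))
  refine .of_subsingleton_ext (fun n => contravariant_subsingleton_ext₁ h.shortExact
    (subsingleton_ext_of_module_projective n) (hX.subsingleton_ext (n + 1))) fun n => ?_
  cases n with
  | zero =>
    refine subsingleton_ext_one_of_exists_f_comp_eq hdual.shortExact
      (subsingleton_ext_of_module_projective 0) fun φ => ?_
    obtain ⟨x, hx⟩ := hX.2.1.2 φ.hom
    obtain ⟨y, rfl⟩ := h.2.1 x
    exact ⟨ModuleCat.ofHom (Module.Dual.eval R F y), ModuleCat.hom_ext hx⟩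
  | succ n =>
    exact contravariant_subsingleton_ext₃ hdual.shortExact (hX.subsingleton_ext_dual n)
      (subsingleton_ext_of_module_projective (n + 1))

lemma IsTotallyReflexive.exists_isShortExact_projective {X : Type u} [AddCommGroup X] [Module R X]
    (h : IsTotallyReflexive R X) :
    ∃ (P X' : ModuleCat.{u} R) (f : X →ₗ[R] P) (g : P →ₗ[R] X'),
      Module.Projective R P ∧ IsShortExact R f g ∧ IsTotallyReflexive R X' := by
  have := h.isReflexive
  have := h.dual.1
  obtain ⟨n, p, hp⟩ := Module.Finite.exists_fin' R (Module.Dual R X)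
  have hker := isShortExact_subtype_ker hp
  have hdual := hker.dual (h.dual.subsingleton_ext 0)
  refine ⟨ModuleCat.of R (Module.Dual R (Fin n → R)),
    ModuleCat.of R (Module.Dual R (LinearMap.ker p)),
    p.dualMap ∘ₗ (Module.evalEquiv R X).toLinearMap, (LinearMap.ker p).subtype.dualMap,
    inferInstanceAs (Module.Projective R (Module.Dual R _)),
    ⟨hdual.1.comp (Module.evalEquiv R X).injective, hdual.2.1, ?_⟩,
    (h.dual.of_isShortExact hker).dual⟩
  rw [LinearMap.exact_iff, LinearMap.range_comp_of_range_eq_top _ (LinearEquiv.range _)]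
  exact hdual.2.2.linearMap_ker_eq

lemma IsTotallyReflexive.subsingleton_ext_of_hasInjectiveDimensionLE {M : ModuleCat.{u} R} {n : ℕ}
    (hM : HasInjectiveDimensionLE M n) {X : ModuleCat.{u} R} (hX : IsTotallyReflexive R X) (j : ℕ) :
    Subsingleton (Abelian.Ext X M (j + 1)) := by
  obtain ⟨k, hk⟩ : ∃ k, n ≤ j + k := ⟨n, by omega⟩
  induction k generalizing X j with
  | zero => exact HasInjectiveDimensionLT.subsingleton M (n + 1) (j + 1) (by omega) X
  | succ k ih =>
    obtain ⟨P, X', f, g, hP, hfg, hX'⟩ := hX.exists_isShortExact_projective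
    exact contravariant_subsingleton_ext₁ hfg.shortExact (subsingleton_ext_of_module_projective j)
      (ih hX' (j + 1) (by omega))

end TotallyReflexive

section Orthogonal

variable {R}

/-- The modules `N` in the right `Ext¹`-orthogonal of the class of totally reflexive modules,
that is, `Ext¹(X, N) = 0` for every totally reflexive `X`. -/
def IsTotallyReflexiveOrthogonal (N : ModuleCat.{u} R) : Prop :=
  ∀ X : ModuleCat.{u} R, IsTotallyReflexive R X → Subsingleton (Abelian.Ext X N 1)

namespace IsTotallyReflexiveOrthogonal

variable [IsNoetherianRing R] {N X : ModuleCat.{u} R}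

lemma exists_comp_eq_of_projective (hN : IsTotallyReflexiveOrthogonal N)
    (hX : IsTotallyReflexive R X) (φ : X ⟶ N) :
    ∃ (P : ModuleCat.{u} R) (f : X ⟶ P) (g : P ⟶ N), Module.Projective R P ∧ f ≫ g = φ := by
  obtain ⟨P, X', f, g, hP, hfg, hX'⟩ := hX.exists_isShortExact_projective
  obtain ⟨ψ, hψ⟩ := exists_f_comp_eq_of_subsingleton_ext hfg.shortExact (hN X' hX') φ
  exact ⟨P, ModuleCat.ofHom f, ψ, hP, hψ⟩

lemma exists_lift (hN : IsTotallyReflexiveOrthogonal N) (hX : IsTotallyReflexive R X) (φ : X ⟶ N)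
    {F : ModuleCat.{u} R} {p : F →ₗ[R] N} (hp : Function.Surjective p) :
    ∃ ψ : X ⟶ F, ψ ≫ ModuleCat.ofHom p = φ := by
  obtain ⟨P, f, g, hP, rfl⟩ := hN.exists_comp_eq_of_projective hX φ
  obtain ⟨χ, hχ⟩ := Module.projective_lifting_property p g.hom hp
  exact ⟨f ≫ ModuleCat.ofHom χ, ModuleCat.hom_ext (congrArg (· ∘ₗ f.hom) hχ)⟩

lemma ker (hN : IsTotallyReflexiveOrthogonal N) {n : ℕ} {p : (Fin n → R) →ₗ[R] N}
    (hp : Function.Surjective p) :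
    IsTotallyReflexiveOrthogonal (ModuleCat.of R (LinearMap.ker p)) := fun _ hX =>
  subsingleton_ext_one_of_exists_comp_g_eq (isShortExact_subtype_ker hp).shortExact
    (subsingleton_ext_pi_right (K := ModuleCat.of R R) (hX.subsingleton_ext 0))
    fun φ => hN.exists_lift hX φ hp

-- Induction on `m`: `π` lifts to a map from a totally reflexive resolution of `G` to a free
-- resolution of `N`, and on a totally reflexive `G` it factors through a projective module.
lemma mk₀_comp_eq_zero (hN : IsTotallyReflexiveOrthogonal N) [Module.Finite R N] {m : ℕ}
    {G : ModuleCat.{u} R} (hG : GdimLE R m G) (π : G ⟶ N) {Y : ModuleCat.{u} R} {i : ℕ}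
    (hi : m ≤ i) (e : Abelian.Ext N Y (i + 1)) :
    (Abelian.Ext.mk₀ π).comp e (zero_add (i + 1)) = 0 := by
  induction m generalizing N G i with
  | zero =>
    obtain ⟨P, f, g, hP, rfl⟩ := hN.exists_comp_eq_of_projective hG π
    rw [← Abelian.Ext.mk₀_comp_mk₀_assoc, (subsingleton_ext_of_module_projective i).elim
      ((Abelian.Ext.mk₀ g).comp e _) 0, Abelian.Ext.comp_zero]
  | succ m ih =>
    obtain ⟨X, K, f, g, hX, hfg, hK⟩ := hG
    obtain ⟨i, rfl⟩ := Nat.exists_eq_add_of_le' (show 1 ≤ i by omega)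
    obtain ⟨n, p, hp⟩ := Module.Finite.exists_fin' R N
    have hker := isShortExact_subtype_ker hp
    obtain ⟨α, hα⟩ := hN.exists_lift (F := ModuleCat.of R (Fin n → R)) hX
      (ModuleCat.ofHom g ≫ π) hp
    have hαf (x : K) : α.hom (f x) ∈ LinearMap.ker p := by
      calc p (α.hom (f x)) = π.hom (g (f x)) := congr($hα (f x))
        _ = 0 := by rw [hfg.2.2.apply_apply_eq_zero, map_zero]
    let τ : hfg.shortComplex ⟶ hker.shortComplex :=
      { τ₁ := ModuleCat.ofHom (LinearMap.codRestrict _ (α.hom ∘ₗ f) hαf)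
        τ₂ := α
        τ₃ := π
        comm₁₂ := rfl
        comm₂₃ := hα }
    exact mk₀_τ₃_comp_eq_zero hfg.shortExact hker.shortExact τ
      (subsingleton_ext_of_module_projective (i + 1))
      (fun e' => ih (hN.ker hp) hK _ (by omega) e') e

lemma hasProjectiveDimensionLE_of_retract (hN : IsTotallyReflexiveOrthogonal N) [Module.Finite R N]
    {m : ℕ} {G : ModuleCat.{u} R} (hG : GdimLE R m G) (r : Retract N G) :
    HasProjectiveDimensionLE N m :=
  (hasProjectiveDimensionLT_iff N (m + 1)).2 fun i hi Y e => by
    obtain ⟨i, rfl⟩ := Nat.exists_eq_add_of_le' (show 1 ≤ i by omega)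
    exact eq_zero_of_mk₀_retract_comp_eq_zero r (hN.mk₀_comp_eq_zero hG r.r (by omega) e)

end IsTotallyReflexiveOrthogonal

end Orthogonal

section Reducing

variable {R}

lemma IsSyzygy.subsingleton_ext {n j : ℕ} {W K M : ModuleCat.{u} R} (h : IsSyzygy R n W K)
    (hK : Subsingleton (Abelian.Ext K M (j + n + 1))) : Subsingleton (Abelian.Ext W M (j + 1)) := by
  induction n generalizing K with
  | zero =>
    obtain ⟨e⟩ := h
    exact subsingleton_ext_of_retract_left e.toModuleIso.retract hK
  | succ n ih =>
    obtain ⟨W', F, f, g, hF, -, hfg, hW⟩ := h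
    exact ih hW (contravariant_subsingleton_ext₁ hfg.shortExact
      (subsingleton_ext_of_module_projective (j + n)) hK)

lemma ReducingStep.subsingleton_ext {K L M : ModuleCat.{u} R} {a b n : ℕ}
    (h : ReducingStep R K L a b n) (hK : ∀ i, Subsingleton (Abelian.Ext K M (i + 2))) (i : ℕ) :
    Subsingleton (Abelian.Ext L M (i + 2)) := by
  obtain ⟨W, f, g, hW, hfg⟩ := h
  refine contravariant_subsingleton_ext₂ hfg.shortExact (subsingleton_ext_pi_left (hK i))
    (subsingleton_ext_pi_left (hW.subsingleton_ext (j := i + 1) ?_))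
  rw [show i + 1 + n + 1 = i + n + 2 by omega]
  exact hK (i + n)

lemma ReducingStep.nonempty_retract {K L M : ModuleCat.{u} R} {a b n : ℕ}
    (h : ReducingStep R K L a b n) (ha : 1 ≤ a) (hn : 1 ≤ n)
    (hK : ∀ i, Subsingleton (Abelian.Ext K M (i + 2))) (r : Retract M K) :
    Nonempty (Retract M L) := by
  obtain ⟨W, f, g, hW, hfg⟩ := h
  obtain ⟨n, rfl⟩ := Nat.exists_eq_add_of_le' hn
  let summand : Retract K (ModuleCat.of R (Fin a → K)) :=
    { i := ModuleCat.ofHom (LinearMap.single R (fun _ => K) ⟨0, ha⟩)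
      r := ModuleCat.ofHom (LinearMap.proj ⟨0, ha⟩)
      retract := by ext x; simp }
  refine nonempty_retract_X₂ hfg.shortExact (r.trans summand)
    (subsingleton_ext_pi_left (hW.subsingleton_ext (j := 0) ?_))
  rw [zero_add]
  exact hK n

lemma HasReducingSeq.exists_retract {P : ModuleCat.{u} R → Prop} {M : ModuleCat.{u} R} {r : ℕ}
    (h : HasReducingSeq R P M r) (hM : ∀ i, Subsingleton (Abelian.Ext M M (i + 2))) :
    ∃ G, P G ∧ Nonempty (Retract M G) := by
  obtain ⟨K, a, b, n, rfl, -, hstep, hP⟩ := h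
  suffices ∀ i, (∀ j, Subsingleton (Abelian.Ext (K i) (K 0) (j + 2))) ∧
      Nonempty (Retract (K 0) (K i)) from ⟨K (Fin.last r), hP, (this _).2⟩
  intro i
  induction i using Fin.induction with
  | zero => exact ⟨hM, ⟨.refl _⟩⟩
  | succ i ih =>
    obtain ⟨hK, ⟨r⟩⟩ := ih
    obtain ⟨ha, -, hn, hKL⟩ := hstep i
    exact ⟨hKL.subsingleton_ext hK, hKL.nonempty_retract ha hn hK r⟩

lemma exists_hasReducingSeq_of_reducingDim_ne_top {P : ModuleCat.{u} R → Prop}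
    {M : ModuleCat.{u} R} (h : ReducingDim R P M ≠ ⊤) : ∃ r, HasReducingSeq R P M r := by
  contrapose! h
  exact sInf_eq_top.2 fun _ ⟨r, _, hr⟩ => absurd hr (h r)

end Reducing

section Depth

variable {R} [IsLocalRing R]

lemma subsingleton_ext_residue_of_lt_depth {M : ModuleCat.{u} R} {i : ℕ}
    (hi : (i : ℕ∞) < depth R M) :
    Subsingleton (Abelian.Ext (ModuleCat.of R (R ⧸ IsLocalRing.maximalIdeal R)) M i) :=
  ExtVanish.subsingleton_ext (by_contra fun h => hi.not_ge (sInf_le ⟨i, rfl, h⟩))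

variable [IsNoetherianRing R]

lemma extVanish_self_of_le_depth {d : ℕ} (hd : ringKrullDim R ≤ d) {M : Type u} [AddCommGroup M]
    [Module R M] [Module.Finite R M] (hinj : ∃ n, InjdimLE R n (ModuleCat.of R M))
    (hdepth : ((d - 1 : ℕ) : ℕ∞) ≤ depth R (ModuleCat.of R M)) {i : ℕ} (hi : 2 ≤ i) :
    ExtVanish R M M i := by
  obtain ⟨n, hn⟩ := hinj
  obtain ⟨i, rfl⟩ := Nat.exists_eq_add_of_le' (show 1 ≤ i by omega)
  have hM := hasInjectiveDimensionLE_of_ringKrullDim_le hd (ModuleCat.of R M) (injdimLE_iff.1 hn)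
  exact extVanish_succ_of_subsingleton_ext <| subsingleton_ext_of_subsingleton_ext_residue_lt hM
    (n := d - 1) (fun j hj => subsingleton_ext_residue_of_lt_depth
      ((Nat.cast_lt.2 hj).trans_le hdepth)) (by omega)

end Depth

theorem stmt4_general (R : Type u) [CommRing R] [IsNoetherianRing R] [IsLocalRing R]
    (M : Type u) [AddCommGroup M] [Module R M] [Module.Finite R M] [Nontrivial M]
    (hinj : ∃ n : ℕ, InjdimLE R n (ModuleCat.of R M))
    (hr : rGdim R (ModuleCat.of R M) ≠ ⊤)
    (hext : ∀ i : ℕ, 2 ≤ i → ExtVanish R M M i) :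
    IsGorensteinRing R := by
  have hMM (i : ℕ) (hi : 2 ≤ i) := (hext i hi).subsingleton_ext
  obtain ⟨n, hn⟩ := hinj
  rw [injdimLE_iff] at hn
  obtain ⟨_, hseq⟩ := exists_hasReducingSeq_of_reducingDim_ne_top hr
  obtain ⟨G, ⟨m, hG⟩, ⟨r⟩⟩ := hseq.exists_retract fun i => hMM (i + 2) (by omega)
  have horth : IsTotallyReflexiveOrthogonal (ModuleCat.of R M) := fun X hX =>
    hX.subsingleton_ext_of_hasInjectiveDimensionLE hn 0
  have hpd : HasProjectiveDimensionLE (ModuleCat.of R M) 1 :=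
    hasProjectiveDimensionLT_of_forall_subsingleton_ext_self
      (horth.hasProjectiveDimensionLE_of_retract hG r) hMM
  exact ⟨n, injdimLE_iff.2 <| hasInjectiveDimensionLE_of_subsingleton_ext_quotient fun I =>
    subsingleton_ext_self_of_hasProjectiveDimensionLE_one hpd
      (HasInjectiveDimensionLT.subsingleton _ (n + 1) (n + 1) le_rfl _)⟩

theorem stmt4 (R : Type u) [CommRing R] [IsNoetherianRing R] [IsLocalRing R]
    (d : ℕ) (hd : ringKrullDim R = (d : WithBot (WithTop ℕ)))
    (M : Type u) [AddCommGroup M] [Module R M] [Module.Finite R M] [Nontrivial M]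
    (hinj : ∃ n : ℕ, InjdimLE R n (ModuleCat.of R M))
    (hr : rGdim R (ModuleCat.of R M) ≠ ⊤)
    (hdepth : ((d - 1 : ℕ) : ℕ∞) ≤ depth R (ModuleCat.of R M)) :
    IsGorensteinRing R :=
  stmt4_general R M hinj hr fun _ => extVanish_self_of_le_depth hd.le hinj hdepth
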